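/- For every odd n ≥ 5, there exists δ > 0 such that for all ρ with 0 < ρ < δ, Stab_ρ(g_n) < Stab_ρ(Maj_n). In particular, g_n is a linear threshold function witnessing that the 'Majority is Least Stable' conjecture is false for every odd n ≥ 5. -/

import Mathlib

open Finset

namespace BKS

/-- sign function: 1 if z ≥ 0, -1 otherwise. -/
noncomputable def sgn (z : ℝ) : ℝ := if 0 ≤ z then 1 else -1

/-- encode Bool as the ±1 value of a bit. -/
def chi (b : Bool) : ℝ := if b then 1 else -1

/-- Fourier coefficient of f at S. -/
noncomputable def fourierCoeff {n : ℕ} (f : (Fin n → Bool) → ℝ) (S : Finset (Fin n)) : ℝ :=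
  (1 / 2 ^ n : ℝ) * ∑ x : Fin n → Bool, f x * ∏ i ∈ S, chi (x i)

/-- Fourier weight of f at level k: W^(k)[f]. -/
noncomputable def fourierWeight {n : ℕ} (k : ℕ) (f : (Fin n → Bool) → ℝ) : ℝ :=
  ∑ S ∈ Finset.univ.filter (fun S : Finset (Fin n) => S.card = k), (fourierCoeff f S) ^ 2

/-- Noise stability of f at ρ. -/
noncomputable def noiseStab {n : ℕ} (ρ : ℝ) (f : (Fin n → Bool) → ℝ) : ℝ :=
  ∑ k ∈ Finset.range (n + 1), ρ ^ k * fourierWeight k f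

/-- Majority function on n bits. -/
noncomputable def Maj (n : ℕ) : (Fin n → Bool) → ℝ := fun x => sgn (∑ i, chi (x i))

/-- The function g_n(x) = sgn(2(x_1 + ⋯ + x_{n-3}) + x_{n-2} + x_{n-1} + x_n). -/
noncomputable def gfun (n : ℕ) : (Fin n → Bool) → ℝ :=
  fun x => sgn (∑ i : Fin n, (if (i : ℕ) < n - 3 then (2 : ℝ) else 1) * chi (x i))

/-- f is a linear threshold function. -/
def IsLTF {n : ℕ} (f : (Fin n → Bool) → ℝ) : Prop :=
  ∃ (w0 : ℝ) (w : Fin n → ℝ), ∀ x, f x = sgn (w0 + ∑ i, w i * chi (x i))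

/-!
`g_n` is the majority of the first `n - 3` bits with ties broken by the majority of the last three,
while `Maj_n` for odd `n` is the majority of `n - 1` bits with ties broken by the last one. If `p`
is the probability of a tie among `m` bits, `m` even, breaking ties by an odd function `h` gives
level-one coefficient `p` at each of the `m` bits, independently of `h`, and `p * ĥ({j})` at each
tie-breaking bit `j`. Hence, with `m = n - 3`, `W¹[g_n] = p² (m + 3 / 4)`, whereas
`W¹[Maj_n] = (m + 3) (p (m + 1) / (m + 2))²`, which exceeds it by `(p m / (2 (m + 2)))²`.
Both functions are odd, so `W⁰` vanishes and the level-one weight is the derivative of the noise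
stability at `ρ = 0`, which decides the comparison for small `ρ`.
-/

open Filter Topology

section NoiseStability

variable {n : ℕ}

lemma fourierWeight_one (f : (Fin n → Bool) → ℝ) :
    fourierWeight 1 f = ∑ i, fourierCoeff f {i} ^ 2 := by
  have singletons : univ.filter (fun S : Finset (Fin n) => S.card = 1) = powersetCard 1 univ := by
    ext S
    simp [mem_powersetCard]
  rw [fourierWeight, singletons, powersetCard_one, sum_map]
  rfl

lemma noiseStab_zero (f : (Fin n → Bool) → ℝ) : noiseStab 0 f = fourierWeight 0 f := by
  simp [noiseStab, sum_range_succ']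

lemma hasDerivAt_noiseStab_zero (f : (Fin n → Bool) → ℝ) :
    HasDerivAt (fun ρ => noiseStab ρ f) (fourierWeight 1 f) 0 := by
  have termwise : HasDerivAt (fun ρ => noiseStab ρ f)
      (∑ k ∈ range (n + 1), k * (0 : ℝ) ^ (k - 1) * fourierWeight k f) 0 :=
    HasDerivAt.fun_sum fun k _ => (hasDerivAt_pow k 0).mul_const _
  convert termwise using 1
  rcases n with _ | n
  · simp [fourierWeight_one]
  · simp [sum_range_succ']

lemma eventually_noiseStab_lt {f g : (Fin n → Bool) → ℝ}
    (h₀ : fourierWeight 0 f = fourierWeight 0 g) (h₁ : fourierWeight 1 f < fourierWeight 1 g) :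
    ∀ᶠ ρ in 𝓝[>] 0, noiseStab ρ f < noiseStab ρ g := by
  have deriv_diff : HasDerivAt (fun ρ => noiseStab ρ g - noiseStab ρ f)
      (fourierWeight 1 g - fourierWeight 1 f) 0 :=
    (hasDerivAt_noiseStab_zero g).sub (hasDerivAt_noiseStab_zero f)
  have diff_zero : noiseStab 0 g - noiseStab 0 f = 0 := by
    rw [noiseStab_zero, noiseStab_zero, h₀, sub_self]
  have slope_pos := (deriv_diff.tendsto_slope.mono_left (nhdsGT_le_nhdsNE 0)).eventually_const_lt
    (sub_pos.2 h₁)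
  filter_upwards [slope_pos, self_mem_nhdsWithin] with ρ hslope hρ
  rw [slope_def_field, diff_zero, sub_zero, sub_zero] at hslope
  exact sub_pos.1 ((div_pos_iff_of_pos_right hρ).1 hslope)

end NoiseStability

section OddFunctions

variable {n : ℕ}

/-- A function on the cube is odd if negating every bit negates its value. Negation of the `±1`
encoded bits is complementation in `Fin n → Bool`. -/
def IsOdd (f : (Fin n → Bool) → ℝ) : Prop := ∀ x, f xᶜ = -f x

lemma IsOdd.sum_eq_zero {f : (Fin n → Bool) → ℝ} (hf : IsOdd f) : ∑ x, f x = 0 := by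
  have reindex : ∑ x, f xᶜ = ∑ x, f x := Equiv.sum_comp compl_involutive.toPerm f
  simp only [hf _, sum_neg_distrib] at reindex
  linarith

lemma IsOdd.fourierWeight_zero {f : (Fin n → Bool) → ℝ} (hf : IsOdd f) :
    fourierWeight 0 f = 0 := by
  simp [fourierWeight, fourierCoeff, card_eq_zero, filter_eq', hf.sum_eq_zero]

lemma chi_compl (b : Bool) : chi bᶜ = -chi b := by
  cases b <;> simp [chi]

lemma isOdd_chi_apply (i : Fin n) : IsOdd fun x => chi (x i) :=
  fun x => chi_compl (x i)

lemma sum_chi_compl (x : Fin n → Bool) : ∑ i, chi (xᶜ i) = -∑ i, chi (x i) := by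
  simp only [Pi.compl_apply, chi_compl, sum_neg_distrib]

end OddFunctions

section Sign

lemma sgn_of_pos {z : ℝ} (hz : 0 < z) : sgn z = 1 := if_pos hz.le

lemma sgn_of_neg {z : ℝ} (hz : z < 0) : sgn z = -1 := if_neg hz.not_ge

lemma sgn_neg_of_ne_zero {z : ℝ} (hz : z ≠ 0) : sgn (-z) = -sgn z := by
  rcases hz.lt_or_gt with hz | hz
  · rw [sgn_of_neg hz, sgn_of_pos (neg_pos.2 hz), neg_neg]
  · rw [sgn_of_pos hz, sgn_of_neg (neg_neg_iff_pos.2 hz)]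

lemma sgn_add_of_abs_lt_abs {z w : ℝ} (h : |w| < |z|) : sgn (z + w) = sgn z := by
  obtain ⟨hneg, hpos⟩ := abs_lt.1 h
  rcases (abs_pos.1 ((abs_nonneg w).trans_lt h)).lt_or_gt with hz | hz
  · rw [abs_of_neg hz] at hpos
    rw [sgn_of_neg hz, sgn_of_neg (by linarith)]
  · rw [abs_of_pos hz] at hneg
    rw [sgn_of_pos hz, sgn_of_pos (by linarith)]

lemma sgn_mul_of_pos {a : ℝ} (ha : 0 < a) (z : ℝ) : sgn (a * z) = sgn z := by
  simp only [sgn, mul_nonneg_iff_of_pos_left ha]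

lemma sgn_chi (b : Bool) : sgn (chi b) = chi b := by
  cases b <;> norm_num [sgn, chi]

lemma chi_mul_self (b : Bool) : chi b * chi b = 1 := by
  cases b <;> norm_num [chi]

end Sign

section SumOfBits

variable {n : ℕ}

lemma sum_chi_eq (x : Fin n → Bool) :
    ∑ i, chi (x i) = 2 * (#{i | x i = true} : ℝ) - n := by
  have chi_eq (b : Bool) : chi b = 2 * (if b = true then 1 else 0) - 1 := by
    cases b <;> norm_num [chi]
  simp only [chi_eq, sum_sub_distrib, ← mul_sum, sum_boole, sum_const, card_univ,
    Fintype.card_fin, nsmul_one]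

lemma abs_sum_chi_le (x : Fin n → Bool) : |∑ i, chi (x i)| ≤ n := by
  have card_le : (#{i | x i = true} : ℝ) ≤ n := mod_cast card_finset_fin_le _
  rw [sum_chi_eq, abs_le]
  constructor <;> linarith [(#{i | x i = true}).cast_nonneg (α := ℝ)]

lemma sum_chi_ne_zero_of_odd (hn : Odd n) (x : Fin n → Bool) : ∑ i, chi (x i) ≠ 0 := by
  obtain ⟨k, rfl⟩ := hn
  rw [sum_chi_eq, sub_ne_zero]
  norm_cast
  omega

lemma two_le_abs_sum_chi_of_even (hn : Even n) {x : Fin n → Bool} (hx : ∑ i, chi (x i) ≠ 0) :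
    2 ≤ |∑ i, chi (x i)| := by
  obtain ⟨k, rfl⟩ := hn
  obtain ⟨t, sum_eq⟩ : ∃ t : ℤ, ∑ i, chi (x i) = 2 * t := by
    refine ⟨#{i | x i = true} - k, ?_⟩
    rw [sum_chi_eq]
    push_cast
    ring
  have t_ne_zero : t ≠ 0 := by
    rintro rfl
    simp [sum_eq] at hx
  have one_le : (1 : ℝ) ≤ |(t : ℝ)| := mod_cast Int.one_le_abs t_ne_zero
  rw [sum_eq, abs_mul, abs_two]
  linarith

end SumOfBits

section TieProbability

/-- The probability that `n` uniform `±1` bits sum to zero. -/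
noncomputable def tieProb (n : ℕ) : ℝ :=
  #{x : Fin n → Bool | ∑ i, chi (x i) = 0} / 2 ^ n

lemma card_sum_chi_eq_zero (k : ℕ) :
    #{x : Fin (2 * k) → Bool | ∑ i, chi (x i) = 0} = k.centralBinom := by
  have sum_eq_zero_iff (x : Fin (2 * k) → Bool) :
      ∑ i, chi (x i) = 0 ↔ #{i | x i = true} = k := by
    rw [sum_chi_eq, Nat.cast_mul, Nat.cast_two, sub_eq_zero, mul_right_inj' two_ne_zero,
      Nat.cast_inj]
  calc #{x : Fin (2 * k) → Bool | ∑ i, chi (x i) = 0}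
      = #(powersetCard k (univ : Finset (Fin (2 * k)))) :=
        card_nbij' (fun x => ({i | x i = true} : Finset _)) (fun S i => decide (i ∈ S))
          (by simp [Set.MapsTo, sum_eq_zero_iff]) (by simp [Set.MapsTo, sum_eq_zero_iff])
          (by simp [Set.LeftInvOn]) (by simp [Set.LeftInvOn])
    _ = k.centralBinom := by simp [Nat.centralBinom_eq_two_mul_choose]

lemma tieProb_add_two {n : ℕ} (hn : Even n) :
    tieProb (n + 2) = tieProb n * ((n + 1) / (n + 2)) := by
  obtain ⟨k, rfl⟩ := hn.exists_two_nsmul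
  have centralBinom_succ : ((k : ℝ) + 1) * (k + 1).centralBinom
      = 2 * (2 * k + 1) * k.centralBinom := mod_cast Nat.succ_mul_centralBinom_succ k
  rw [smul_eq_mul, show 2 * k + 2 = 2 * (k + 1) by ring, tieProb, tieProb, card_sum_chi_eq_zero,
    card_sum_chi_eq_zero, mul_add_one, pow_add]
  push_cast
  field_simp
  linarith

lemma tieProb_two : tieProb 2 = 1 / 2 := by
  rw [tieProb, card_sum_chi_eq_zero 1]
  norm_num [Nat.centralBinom]

lemma tieProb_pos {n : ℕ} (hn : Even n) : 0 < tieProb n := by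
  obtain ⟨k, rfl⟩ := hn.exists_two_nsmul
  rw [smul_eq_mul, tieProb, card_sum_chi_eq_zero]
  have := k.centralBinom_pos
  positivity

end TieProbability

section TieBreaking

variable {m p : ℕ}

/-- The majority of the first `m` bits, with ties broken by applying `h` to the remaining bits. -/
noncomputable def tieBreak (m : ℕ) (h : (Fin p → Bool) → ℝ) : (Fin (m + p) → Bool) → ℝ :=
  fun x => if ∑ i, chi (x (Fin.castAdd p i)) = 0 then h fun j => x (Fin.natAdd m j)
    else Maj m fun i => x (Fin.castAdd p i)

lemma tieBreak_append (h : (Fin p → Bool) → ℝ) (y : Fin m → Bool) (z : Fin p → Bool) :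
    tieBreak m h (Fin.append y z) = if ∑ i, chi (y i) = 0 then h z else Maj m y := by
  simp [tieBreak]

lemma maj_compl {x : Fin m → Bool} (hx : ∑ i, chi (x i) ≠ 0) : Maj m xᶜ = -Maj m x := by
  rw [Maj, Maj, sum_chi_compl, sgn_neg_of_ne_zero hx]

lemma isOdd_maj (hm : Odd m) : IsOdd (Maj m) :=
  fun x => maj_compl (sum_chi_ne_zero_of_odd hm x)

lemma isOdd_tieBreak {h : (Fin p → Bool) → ℝ} (hh : IsOdd h) : IsOdd (tieBreak m h) := by
  intro x
  have sum_compl := sum_chi_compl fun i => x (Fin.castAdd p i)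
  unfold tieBreak
  split_ifs with tie_compl tie tie
  · exact hh _
  · exact absurd (neg_eq_zero.1 (sum_compl.symm.trans tie_compl)) tie
  · exact absurd (sum_compl.trans (neg_eq_zero.2 tie)) tie_compl
  · exact maj_compl tie

lemma tieBreak_maj (hm : Even m) {a : ℝ} (ha : p < 2 * a) (x : Fin (m + p) → Bool) :
    tieBreak m (Maj p) x =
      sgn (a * ∑ i, chi (x (Fin.castAdd p i)) + ∑ j, chi (x (Fin.natAdd m j))) := by
  have a_pos : 0 < a := by linarith [p.cast_nonneg (α := ℝ)]
  unfold tieBreak Maj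
  split_ifs with tie
  · rw [tie, mul_zero, zero_add]
  · rw [sgn_add_of_abs_lt_abs, sgn_mul_of_pos a_pos]
    calc |∑ j, chi (x (Fin.natAdd m j))| ≤ p := abs_sum_chi_le _
      _ < a * 2 := by linarith
      _ ≤ a * |∑ i, chi (x (Fin.castAdd p i))| := by
        gcongr
        exact two_le_abs_sum_chi_of_even hm tie
      _ = |a * ∑ i, chi (x (Fin.castAdd p i))| := by rw [abs_mul, abs_of_pos a_pos]

lemma maj_eq_tieBreak (hm : Even m) : Maj (m + 1) = tieBreak m (Maj 1) := by
  ext x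
  rw [tieBreak_maj hm (a := 1) (by norm_num), Maj, Fin.sum_univ_add, one_mul]

lemma gfun_eq_tieBreak (hm : Even m) : gfun (m + 3) = tieBreak m (Maj 3) := by
  ext x
  rw [tieBreak_maj hm (a := 2) (by norm_num), gfun, Fin.sum_univ_add]
  simp [mul_sum]

end TieBreaking

section LevelOne

variable {m n p : ℕ}

lemma sum_append {M : Type*} [AddCommMonoid M] (F : (Fin (m + p) → Bool) → M) :
    ∑ x, F x = ∑ y : Fin m → Bool, ∑ z : Fin p → Bool, F (Fin.append y z) := by
  rw [← (Fin.appendEquiv m p).sum_comp, Fintype.sum_prod_type]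
  rfl

lemma fourierCoeff_comp_perm (f : (Fin n → Bool) → ℝ) (σ : Equiv.Perm (Fin n))
    (S : Finset (Fin n)) :
    fourierCoeff (fun x => f (x ∘ σ)) (S.map σ.toEmbedding) = fourierCoeff f S := by
  simp only [fourierCoeff, prod_map]
  congr 1
  exact (σ.symm.arrowCongr (Equiv.refl Bool)).sum_comp fun x => f x * ∏ i ∈ S, chi (x i)

lemma fourierCoeff_maj_singleton_eq (i j : Fin n) :
    fourierCoeff (Maj n) {i} = fourierCoeff (Maj n) {j} := by
  have maj_symm : (fun x => Maj n (x ∘ Equiv.swap i j)) = Maj n := by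
    ext x
    exact congrArg sgn (Equiv.sum_comp (Equiv.swap i j) fun i => chi (x i))
  rw [← fourierCoeff_comp_perm (Maj n) (Equiv.swap i j) {i}, maj_symm, map_singleton,
    Equiv.toEmbedding_apply, Equiv.swap_apply_left]

lemma fourierCoeff_tieBreak_castAdd {h : (Fin p → Bool) → ℝ} (hh : ∑ z, h z = 0) (i : Fin m) :
    fourierCoeff (tieBreak m h) {Fin.castAdd p i} =
      fourierCoeff (fun y => if ∑ i, chi (y i) = 0 then 0 else Maj m y) {i} := by
  have sum_tieBreakers (y : Fin m → Bool) :
      ∑ z, (if ∑ i, chi (y i) = 0 then h z else Maj m y) =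
        2 ^ p * if ∑ i, chi (y i) = 0 then 0 else Maj m y := by
    split_ifs <;> simp [hh]
  simp only [fourierCoeff, prod_singleton, sum_append, tieBreak_append, Fin.append_left,
    ← sum_mul, sum_tieBreakers, mul_assoc, ← mul_sum, pow_add]
  field_simp

lemma fourierCoeff_tieBreak_natAdd (h : (Fin p → Bool) → ℝ) (j : Fin p) :
    fourierCoeff (tieBreak m h) {Fin.natAdd m j} = tieProb m * fourierCoeff h {j} := by
  have sum_tieBreakers (y : Fin m → Bool) :
      ∑ z, (if ∑ i, chi (y i) = 0 then h z else Maj m y) * chi (z j) =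
        (if ∑ i, chi (y i) = 0 then 1 else 0) * ∑ z, h z * chi (z j) := by
    split_ifs
    · rw [one_mul]
    · rw [← mul_sum, (isOdd_chi_apply j).sum_eq_zero, mul_zero, zero_mul]
  simp only [fourierCoeff, prod_singleton, sum_append, tieBreak_append, Fin.append_right,
    sum_tieBreakers, ← sum_mul, sum_boole, tieProb, pow_add]
  field_simp

lemma fourierCoeff_maj_one : fourierCoeff (Maj 1) {0} = 1 := by
  simp [fourierCoeff, Maj, sgn_chi, chi_mul_self]

lemma fourierCoeff_maj (hm : Even m) (i : Fin (m + 1)) :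
    fourierCoeff (Maj (m + 1)) {i} = tieProb m := by
  rw [fourierCoeff_maj_singleton_eq i (Fin.natAdd m 0), maj_eq_tieBreak hm,
    fourierCoeff_tieBreak_natAdd, fourierCoeff_maj_one, mul_one]

lemma fourierWeight_one_maj (hm : Even m) :
    fourierWeight 1 (Maj (m + 1)) = (m + 1) * tieProb m ^ 2 := by
  simp [fourierWeight_one, fourierCoeff_maj hm]

-- The coefficient does not depend on `h`; for `h = Maj 1` it is one of those of `Maj (m + 1)`.
lemma fourierCoeff_tieBreak_castAdd_of_even (hm : Even m) {h : (Fin p → Bool) → ℝ}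
    (hh : ∑ z, h z = 0) (i : Fin m) :
    fourierCoeff (tieBreak m h) {Fin.castAdd p i} = tieProb m := by
  rw [fourierCoeff_tieBreak_castAdd hh,
    ← fourierCoeff_tieBreak_castAdd (isOdd_maj odd_one).sum_eq_zero, ← maj_eq_tieBreak hm,
    fourierCoeff_maj hm]

lemma fourierWeight_one_tieBreak (hm : Even m) {h : (Fin p → Bool) → ℝ} (hh : ∑ z, h z = 0) :
    fourierWeight 1 (tieBreak m h) = tieProb m ^ 2 * (m + fourierWeight 1 h) := by
  simp only [fourierWeight_one, Fin.sum_univ_add, fourierCoeff_tieBreak_castAdd_of_even hm hh,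
    fourierCoeff_tieBreak_natAdd, mul_pow, ← mul_sum, sum_const, card_univ, Fintype.card_fin,
    nsmul_eq_mul]
  ring

lemma fourierWeight_one_gfun (hm : Even m) :
    fourierWeight 1 (gfun (m + 3)) = tieProb m ^ 2 * (m + 3 / 4) := by
  have weight_maj_three : fourierWeight 1 (Maj 3) = 3 / 4 := by
    rw [fourierWeight_one_maj even_two, tieProb_two]
    norm_num
  rw [gfun_eq_tieBreak hm, fourierWeight_one_tieBreak hm (isOdd_maj (by decide)).sum_eq_zero,
    weight_maj_three]

lemma fourierWeight_one_maj_sub_gfun (hm : Even m) :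
    fourierWeight 1 (Maj (m + 3)) - fourierWeight 1 (gfun (m + 3)) =
      (tieProb m * m / (2 * (m + 2))) ^ 2 := by
  rw [fourierWeight_one_gfun hm, fourierWeight_one_maj (hm.add even_two), tieProb_add_two hm]
  push_cast
  field_simp
  ring

lemma fourierWeight_one_gfun_lt_maj (hm : Even m) (hm₀ : 0 < m) :
    fourierWeight 1 (gfun (m + 3)) < fourierWeight 1 (Maj (m + 3)) := by
  have := tieProb_pos hm
  rw [← sub_pos, fourierWeight_one_maj_sub_gfun hm]
  positivity

end LevelOne

lemma isLTF_gfun (n : ℕ) : IsLTF (gfun n) :=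
  ⟨0, fun i => if (i : ℕ) < n - 3 then 2 else 1, fun x => by rw [zero_add, gfun]⟩

theorem stmt10 (n : ℕ) (hn : Odd n) (h5 : 5 ≤ n) :
    IsLTF (gfun n) ∧
    ∃ δ : ℝ, 0 < δ ∧ ∀ ρ : ℝ, 0 < ρ → ρ < δ →
      noiseStab ρ (gfun n) < noiseStab ρ (Maj n) := by
  refine ⟨isLTF_gfun n, ?_⟩
  obtain ⟨m, rfl⟩ : ∃ m, n = m + 3 := ⟨n - 3, by omega⟩
  have m_even : Even m := by grind
  have gfun_odd : IsOdd (gfun (m + 3)) :=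
    gfun_eq_tieBreak m_even ▸ isOdd_tieBreak (isOdd_maj (by decide))
  have weight_zero_eq : fourierWeight 0 (gfun (m + 3)) = fourierWeight 0 (Maj (m + 3)) := by
    rw [gfun_odd.fourierWeight_zero, (isOdd_maj hn).fourierWeight_zero]
  have weight_one_lt := fourierWeight_one_gfun_lt_maj m_even (by omega)
  obtain ⟨δ, δ_pos, stab_lt⟩ := mem_nhdsGT_iff_exists_Ioo_subset.1
    (eventually_noiseStab_lt weight_zero_eq weight_one_lt)
  exact ⟨δ, δ_pos, fun ρ ρ_pos ρ_lt => stab_lt ⟨ρ_pos, ρ_lt⟩⟩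

end BKS
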